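/- Let k be a field, q ∈ k and n ≥ 1 an integer such that (m)_q ≠ 0 for all 1 ≤ m ≤ n. Let A be a unital associative k-algebra and let d₁, d₂, d₃, … ∈ A satisfy d_v·d_u = q^v·d_u·d_v for all integers 1 ≤ u < v. Define B_{0,0} = 1, B_{a,b} = 0 if b = 0 < a or b > a, and B_{a,b} = Σ_{ℓ=b−1}^{a−1} binom(a−1,ℓ)_q·B_{ℓ,b−1}·d_{a−ℓ} for 1 ≤ b ≤ a. Then for every 1 ≤ k ≤ n, B_{n,k} = Σ ((n)_q! / ∏_{i=1}^{n−k+1} ((i)_q!)^{t_i}·(t_i)_{q^i}!) · d₁^{t₁}·d₂^{t₂}⋯d_{n−k+1}^{t_{n−k+1}}, where the sum is over all (t₁, …, t_{n−k+1}) ∈ ℕ^{n−k+1} with t₁ + t₂ + ⋯ + t_{n−k+1} = k and t₁ + 2t₂ + ⋯ + (n−k+1)t_{n−k+1} = n (under the hypothesis on q all the denominators are nonzero elements of k). -/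

import Mathlib

/-- The q-integer `(m)_q = 1 + q + ⋯ + q^{m−1}`. -/
def qInt {k : Type*} [CommRing k] (q : k) (m : ℕ) : k := ∑ i ∈ Finset.range m, q ^ i

/-- The q-factorial `(m)_q! = (1)_q (2)_q ⋯ (m)_q`. -/
def qFact {k : Type*} [CommRing k] (q : k) : ℕ → k
  | 0 => 1
  | m + 1 => qFact q m * qInt q (m + 1)

/-- The Gaussian binomial coefficients: `binom(n,0)_q = 1`, `binom(0,k+1)_q = 0`,
`binom(n,k)_q = binom(n−1,k−1)_q + q^k binom(n−1,k)_q`. -/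
def qBinom {k : Type*} [CommRing k] (q : k) : ℕ → ℕ → k
  | _, 0 => 1
  | 0, _ + 1 => 0
  | n + 1, m + 1 => qBinom q n m + q ^ (m + 1) * qBinom q n (m + 1)

/-!
The explicit sum satisfies the recurrence that determines `B`. Appending `d_j` on the right of an
ordered monomial `d^t` and moving it into place costs `q ^ ∑_{v > j} v t_v`, so the coefficient of
`d^s` in the right-hand side of the recurrence is a sum over the `j` with `s_j ≠ 0`. By
`(j s_j)_q = (j)_q (s_j)_{q^j}`, its `j`-th term is the coefficient of `d^s` in the explicit sum
times `q ^ (∑_{v > j} v s_v) (j s_j)_q / (a)_q`, and these factors add up to `1` because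
`(a)_q` splits along `a = ∑ j s_j`.
-/

section QAnalogue

variable {k : Type*} [CommRing k] (q : k)

theorem qInt_zero : qInt q 0 = 0 :=
  Finset.sum_range_zero _

theorem qInt_succ (m : ℕ) : qInt q (m + 1) = qInt q m + q ^ m :=
  Finset.sum_range_succ _ m

theorem qFact_succ (m : ℕ) : qFact q (m + 1) = qFact q m * qInt q (m + 1) :=
  rfl

theorem qInt_add (a b : ℕ) : qInt q (a + b) = qInt q a + q ^ a * qInt q b := by
  simp only [qInt, Finset.sum_range_add, Finset.mul_sum, pow_add]

theorem qInt_mul (a b : ℕ) : qInt q (a * b) = qInt q a * qInt (q ^ a) b := by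
  induction b with
  | zero => simp only [mul_zero, qInt_zero]
  | succ b ih => rw [Nat.mul_succ, qInt_add, ih, qInt_succ, ← pow_mul]; ring

theorem qInt_sum {N : ℕ} (w : Fin N → ℕ) :
    qInt q (∑ j, w j) = ∑ j, q ^ (∑ v ∈ Finset.Ioi j, w v) * qInt q (w j) := by
  induction N with
  | zero => exact qInt_zero q
  | succ N ih =>
    rw [Fin.sum_univ_succ, add_comm, qInt_add, ih, Fin.sum_univ_succ, Fin.sum_Ioi_zero]
    simp only [Fin.sum_Ioi_succ]
    ring

theorem qFact_ne_zero [IsDomain k] {m : ℕ} (hq : ∀ i, 1 ≤ i → i ≤ m → qInt q i ≠ 0) :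
    qFact q m ≠ 0 := by
  induction m with
  | zero => exact one_ne_zero
  | succ m ih =>
    exact mul_ne_zero (ih fun i h1 hi => hq i h1 (hi.trans m.le_succ)) (hq _ m.succ_pos le_rfl)

theorem qBinom_zero_right (n : ℕ) : qBinom q n 0 = 1 := by
  cases n <;> rfl

theorem qBinom_succ_succ (n m : ℕ) :
    qBinom q (n + 1) (m + 1) = qBinom q n m + q ^ (m + 1) * qBinom q n (m + 1) :=
  rfl

theorem qBinom_eq_zero_of_lt {n m : ℕ} (h : n < m) : qBinom q n m = 0 := by
  induction n generalizing m with
  | zero => obtain ⟨m, rfl⟩ := Nat.exists_eq_succ_of_ne_zero h.ne'; rfl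
  | succ n ih =>
    obtain ⟨m, rfl⟩ := Nat.exists_eq_succ_of_ne_zero (Nat.ne_zero_of_lt h)
    rw [Nat.succ_eq_add_one, qBinom_succ_succ, ih (by omega), ih (by omega), mul_zero, add_zero]

theorem qBinom_self (n : ℕ) : qBinom q n n = 1 := by
  induction n with
  | zero => rfl
  | succ n ih =>
    rw [qBinom_succ_succ, ih, qBinom_eq_zero_of_lt q n.lt_succ_self, mul_zero, add_zero]

theorem qBinom_mul_qFact_mul_qFact (l m : ℕ) :
    qBinom q (l + m) l * (qFact q l * qFact q m) = qFact q (l + m) := by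
  induction l generalizing m with
  | zero => simp only [qBinom_zero_right, qFact, zero_add, one_mul]
  | succ l ihl =>
    induction m with
    | zero => simp only [add_zero, qBinom_self, qFact, mul_one, one_mul]
    | succ m ihm =>
      have hl : qBinom q (l + (m + 1)) l * (qFact q l * qFact q (m + 1)) =
          qFact q (l + 1 + m) := by rw [ihl, add_right_comm, add_assoc]
      have hsplit : qInt q (l + 1 + (m + 1)) =
          qInt q (l + 1) + q ^ (l + 1) * qInt q (m + 1) := qInt_add q _ _
      calc qBinom q (l + 1 + (m + 1)) (l + 1) * (qFact q (l + 1) * qFact q (m + 1))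
          = qInt q (l + 1) * (qBinom q (l + (m + 1)) l * (qFact q l * qFact q (m + 1))) +
            q ^ (l + 1) * qInt q (m + 1) *
              (qBinom q (l + 1 + m) (l + 1) * (qFact q (l + 1) * qFact q m)) := by
            rw [← add_assoc, qBinom_succ_succ, qFact_succ, qFact_succ,
              show l + (m + 1) = l + 1 + m by omega]
            ring
        _ = qFact q (l + 1 + m) * qInt q (l + 1 + (m + 1)) := by rw [hl, ihm, hsplit]; ring

end QAnalogue

section OrderedMonomial

/-- The ordered monomial `x₀ ^ t₀ * x₁ ^ t₁ * ⋯` with exponent vector `t` in possibly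
noncommuting elements `x`. -/
def orderedMonomial {A : Type*} [Monoid A] {N : ℕ} (x : Fin N → A) (t : Fin N → ℕ) : A :=
  (List.ofFn fun i => x i ^ t i).prod

theorem orderedMonomial_succ {A : Type*} [Monoid A] {N : ℕ} (x : Fin (N + 1) → A)
    (t : Fin (N + 1) → ℕ) :
    orderedMonomial x t =
      x 0 ^ t 0 * orderedMonomial (fun i => x i.succ) (fun i => t i.succ) := by
  rw [orderedMonomial, List.ofFn_succ, List.prod_cons, orderedMonomial]

theorem orderedMonomial_zero {A : Type*} [Monoid A] {N : ℕ} (x : Fin N → A) :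
    orderedMonomial x 0 = 1 := by
  simp [orderedMonomial]

variable {k A : Type*} [CommSemiring k] [Semiring A] [Algebra k A] {N : ℕ}

theorem pow_mul_eq_smul_of_mul_eq_smul {c : k} {x y : A} (h : y * x = c • (x * y)) (n : ℕ) :
    y ^ n * x = c ^ n • (x * y ^ n) := by
  have hxy : SemiconjBy x (c • y) y := by rw [SemiconjBy, mul_smul_comm, h]
  rw [← (hxy.pow_right n).eq, smul_pow, mul_smul_comm]

theorem orderedMonomial_mul_eq_smul {x : Fin N → A} {y : A} {c : Fin N → k}
    (h : ∀ v, x v * y = c v • (y * x v)) (t : Fin N → ℕ) :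
    orderedMonomial x t * y = (∏ v, c v ^ t v) • (y * orderedMonomial x t) := by
  induction N with
  | zero => simp [orderedMonomial]
  | succ N ih =>
    rw [orderedMonomial_succ, mul_assoc, ih (fun v => h v.succ), mul_smul_comm, ← mul_assoc,
      pow_mul_eq_smul_of_mul_eq_smul (h 0), smul_mul_assoc, smul_smul, mul_assoc,
      Fin.prod_univ_succ, mul_comm (∏ _, _)]

theorem orderedMonomial_mul_apply {x : Fin N → A} {c : Fin N → Fin N → k}
    (hx : ∀ u v, u < v → x v * x u = c u v • (x u * x v)) (t : Fin N → ℕ) (j : Fin N) :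
    orderedMonomial x t * x j =
      (∏ v ∈ Finset.Ioi j, c j v ^ t v) • orderedMonomial x (t + Pi.single j 1) := by
  induction N with
  | zero => exact j.elim0
  | succ N ih =>
    rw [orderedMonomial_succ, orderedMonomial_succ, mul_assoc]
    cases j using Fin.cases with
    | zero =>
      rw [orderedMonomial_mul_eq_smul (fun v => hx 0 v.succ v.succ_pos), Fin.prod_Ioi_zero,
        mul_smul_comm, ← mul_assoc, ← pow_succ]
      simp [Fin.succ_ne_zero]
    | succ j =>
      rw [ih (fun u v huv => hx u.succ v.succ (Fin.succ_lt_succ_iff.mpr huv)), mul_smul_comm,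
        Fin.prod_Ioi_succ]
      simp [Pi.single_apply, Pi.add_def, (Fin.succ_ne_zero j).symm]

theorem orderedMonomial_mul_apply_of_qComm {q : k} {x : Fin N → A}
    (hx : ∀ u v : Fin N, u < v → x v * x u = q ^ (v.val + 1) • (x u * x v))
    (t : Fin N → ℕ) (j : Fin N) :
    orderedMonomial x t * x j =
      q ^ (∑ v ∈ Finset.Ioi j, (v.val + 1) * (t + Pi.single j 1 : Fin N → ℕ) v) •
        orderedMonomial x (t + Pi.single j 1) := by
  rw [orderedMonomial_mul_apply hx, ← Finset.prod_pow_eq_pow_sum]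
  congr 1
  refine Finset.prod_congr rfl fun v hv => ?_
  rw [Pi.add_apply, Pi.single_eq_of_ne (Finset.mem_Ioi.mp hv).ne', add_zero, pow_mul]

end OrderedMonomial

section BellIndex

variable {N : ℕ}

/-- The size `t₀ + 2 t₁ + 3 t₂ + ⋯` of the integer partition having `t i` parts equal to
`i + 1`. -/
def partWeight (t : Fin N → ℕ) : ℕ :=
  ∑ i, (i.val + 1) * t i

/-- The partitions of `a` into `b` parts of size at most `N`, encoded by their multiplicity
vectors: `t i` is the number of parts equal to `i + 1`. -/
def bellIndex (N a b : ℕ) : Finset (Fin N → ℕ) :=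
  (Finset.piAntidiag Finset.univ b).filter fun t => partWeight t = a

theorem mem_bellIndex {a b : ℕ} {t : Fin N → ℕ} :
    t ∈ bellIndex N a b ↔ ∑ i, t i = b ∧ partWeight t = a := by
  simp [bellIndex]

theorem bellIndex_zero_zero : bellIndex N 0 0 = {0} := by
  simp [bellIndex, Finset.filter_singleton, partWeight]

theorem bellIndex_zero_right {a : ℕ} (ha : 0 < a) : bellIndex N a 0 = ∅ := by
  simp [bellIndex, Finset.filter_singleton, partWeight, ha.ne]

theorem partWeight_add_single (t : Fin N → ℕ) (j : Fin N) :
    partWeight (t + Pi.single j 1) = partWeight t + (j.val + 1) := by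
  simp [partWeight, mul_add, Finset.sum_add_distrib, Pi.single_apply]

theorem sum_le_partWeight (t : Fin N → ℕ) : ∑ i, t i ≤ partWeight t :=
  Finset.sum_le_sum fun i _ => Nat.le_mul_of_pos_left (t i) i.val.succ_pos

theorem mul_le_partWeight (t : Fin N → ℕ) (j : Fin N) : (j.val + 1) * t j ≤ partWeight t :=
  Finset.single_le_sum (f := fun i : Fin N => (i.val + 1) * t i) (fun _ _ => Nat.zero_le _)
    (Finset.mem_univ j)

theorem add_single_mem_bellIndex {m b : ℕ} {t : Fin N → ℕ} {j : Fin N} :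
    t + Pi.single j 1 ∈ bellIndex N (m + 1) (b + 1) ↔
      t ∈ bellIndex N (m - j) b ∧ j.val + b ≤ m := by
  have hcount : ∑ i, (t + Pi.single j 1 : Fin N → ℕ) i = ∑ i, t i + 1 := by
    simp [Finset.sum_add_distrib]
  have hle := sum_le_partWeight t
  rw [mem_bellIndex, mem_bellIndex, hcount, partWeight_add_single]
  omega

theorem sum_bellIndex_succ_succ {M : Type*} [AddCommMonoid M] (m b : ℕ)
    (f : (Fin N → ℕ) → Fin N → M) :
    ∑ s ∈ bellIndex N (m + 1) (b + 1), ∑ j with s j ≠ 0, f s j =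
      ∑ j : Fin N with j.val + b ≤ m, ∑ t ∈ bellIndex N (m - j) b, f (t + Pi.single j 1) j := by
  have hswap : ∀ (s : Fin N → ℕ) (j : Fin N),
      s ∈ bellIndex N (m + 1) (b + 1) ∧ j ∈ Finset.univ.filter (fun j => s j ≠ 0) ↔
        s ∈ (bellIndex N (m - j) b).map (addRightEmbedding (Pi.single j 1)) ∧
          j ∈ Finset.univ.filter (fun j : Fin N => j.val + b ≤ m) := by
    intro s j
    simp only [Finset.mem_filter, Finset.mem_univ, true_and, Finset.mem_map,
      addRightEmbedding_apply]
    constructor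
    · rintro ⟨hs, hj⟩
      have hle : Pi.single j 1 ≤ s := by
        intro i
        rcases eq_or_ne i j with rfl | hi
        · simpa using Nat.one_le_iff_ne_zero.mpr hj
        · simp [hi]
      rw [← tsub_add_cancel_of_le hle, add_single_mem_bellIndex] at hs
      exact ⟨⟨_, hs.1, tsub_add_cancel_of_le hle⟩, hs.2⟩
    · rintro ⟨⟨t, ht, rfl⟩, hj⟩
      exact ⟨add_single_mem_bellIndex.mpr ⟨ht, hj⟩, by simp⟩
  rw [Finset.sum_comm' hswap]
  simp only [Finset.sum_map, addRightEmbedding_apply]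

theorem sum_Icc_eq_sum_fin {M : Type*} [AddCommMonoid M] {m b : ℕ} (hN : m < N + b)
    (f : ℕ → M) :
    ∑ ℓ ∈ Finset.Icc b m, f ℓ = ∑ j : Fin N with j.val + b ≤ m, f (m - j) := by
  symm
  refine Finset.sum_bij (fun j _ => m - j.val) ?_ ?_ ?_ fun _ _ => rfl
  · intro j hj
    rw [Finset.mem_filter_univ] at hj
    rw [Finset.mem_Icc]
    omega
  · intro i hi j hj hij
    rw [Finset.mem_filter_univ] at hi hj
    omega
  · intro ℓ hℓ
    rw [Finset.mem_Icc] at hℓ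
    refine ⟨⟨m - ℓ, by omega⟩, ?_, Nat.sub_sub_self hℓ.2⟩
    rw [Finset.mem_filter_univ, Fin.val_mk]
    omega

end BellIndex

section BellDenom

variable {k : Type*} [CommRing k] (q : k) {N : ℕ}

/-- The denominator `∏ i, (i)_q! ^ tᵢ * (tᵢ)_{qⁱ}!` of the q-Bell coefficient; the part size `i`
is stored at index `i - 1`. -/
def bellDenom (t : Fin N → ℕ) : k :=
  ∏ i, (qFact q (i.val + 1) ^ t i * qFact (q ^ (i.val + 1)) (t i))

theorem bellDenom_add_single (t : Fin N → ℕ) (j : Fin N) :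
    bellDenom q (t + Pi.single j 1) =
      bellDenom q t * (qFact q (j.val + 1) * qInt (q ^ (j.val + 1)) (t j + 1)) := by
  have hfactor (i : Fin N) :
      qFact q (i.val + 1) ^ (t + Pi.single j 1 : Fin N → ℕ) i *
          qFact (q ^ (i.val + 1)) ((t + Pi.single j 1 : Fin N → ℕ) i) =
        qFact q (i.val + 1) ^ t i * qFact (q ^ (i.val + 1)) (t i) *
          if i = j then qFact q (j.val + 1) * qInt (q ^ (j.val + 1)) (t j + 1) else 1 := by
    rcases eq_or_ne i j with rfl | hi
    · rw [Pi.add_apply, Pi.single_eq_same, pow_succ, qFact_succ (q ^ _), if_pos rfl]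
      ring
    · rw [Pi.add_apply, Pi.single_eq_of_ne hi, add_zero, if_neg hi, mul_one]
  simp only [bellDenom, hfactor, Finset.prod_mul_distrib, Finset.prod_ite_eq', Finset.mem_univ,
    if_true]

theorem bellDenom_ne_zero [IsDomain k] {t : Fin N → ℕ}
    (hq : ∀ m, 1 ≤ m → m ≤ partWeight t → qInt q m ≠ 0) : bellDenom q t ≠ 0 := by
  refine Finset.prod_ne_zero_iff.mpr fun j _ => mul_ne_zero ?_ ?_
  · rcases Nat.eq_zero_or_pos (t j) with h0 | hpos
    · rw [h0, pow_zero]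
      exact one_ne_zero
    · have hj : j.val + 1 ≤ partWeight t :=
        (Nat.le_mul_of_pos_right _ hpos).trans (mul_le_partWeight t j)
      exact pow_ne_zero _ (qFact_ne_zero q fun i hi hij => hq i hi (hij.trans hj))
  · refine qFact_ne_zero _ fun i hi hit => right_ne_zero_of_mul (a := qInt q (j.val + 1)) ?_
    rw [← qInt_mul]
    exact hq _ (Nat.mul_pos j.val.succ_pos hi)
      ((Nat.mul_le_mul_left _ hit).trans (mul_le_partWeight t j))

end BellDenom

section BellSum

variable {k : Type*} [Field k] (q : k) {N : ℕ}

/-- The q-Bell coefficient `(a)_q! / ∏ i, (i)_q! ^ tᵢ * (tᵢ)_{qⁱ}!` of a partition of `a` with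
multiplicities `t`. -/
def bellCoeff (t : Fin N → ℕ) : k :=
  qFact q (partWeight t) / bellDenom q t

theorem bellCoeff_eq_sum {m : ℕ} {s : Fin N → ℕ} (hs : partWeight s = m + 1) :
    bellCoeff q s =
      ∑ j with s j ≠ 0, q ^ (∑ v ∈ Finset.Ioi j, (v.val + 1) * s v) *
        (qFact q m * qInt q ((j.val + 1) * s j) / bellDenom q s) := by
  have hsupport : ∀ j ∈ Finset.univ, q ^ (∑ v ∈ Finset.Ioi j, (v.val + 1) * s v) *
      (qFact q m * qInt q ((j.val + 1) * s j) / bellDenom q s) ≠ 0 → s j ≠ 0 := by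
    intro j _ hne hj
    exact hne (by rw [hj, mul_zero, qInt_zero, mul_zero, zero_div, mul_zero])
  rw [Finset.sum_filter_of_ne hsupport, bellCoeff, hs, qFact_succ, ← hs, partWeight, qInt_sum,
    Finset.mul_sum, Finset.sum_div]
  exact Finset.sum_congr rfl fun j _ => by ring

theorem qBinom_mul_bellCoeff {t : Fin N → ℕ} {j : Fin N}
    (hne : bellDenom q (t + Pi.single j 1) ≠ 0) :
    qBinom q (partWeight t + j) (partWeight t) * bellCoeff q t =
      qFact q (partWeight t + j) * qInt q ((j.val + 1) * (t j + 1)) /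
        bellDenom q (t + Pi.single j 1) := by
  have hD : bellDenom q t ≠ 0 := by
    rw [bellDenom_add_single] at hne
    exact left_ne_zero_of_mul hne
  rw [bellCoeff, ← mul_div_assoc, div_eq_div_iff hD hne, bellDenom_add_single, qFact_succ,
    qInt_mul, ← qBinom_mul_qFact_mul_qFact]
  ring

variable {A : Type*} [Semiring A] [Algebra k A]

/-- The explicit partial q-Bell polynomial: the sum of the monomials `x₀ ^ t₀ * x₁ ^ t₁ * ⋯`
over the partitions `t` of `a` into `b` parts, weighted by the q-Bell coefficients. The variable
`x i` has degree `i + 1`. -/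
def bellSum (x : Fin N → A) (a b : ℕ) : A :=
  ∑ t ∈ bellIndex N a b, bellCoeff q t • orderedMonomial x t

theorem bellSum_zero_zero (x : Fin N → A) : bellSum q x 0 0 = 1 := by
  simp [bellSum, bellIndex_zero_zero, orderedMonomial_zero, bellCoeff, bellDenom, partWeight,
    qFact]

theorem bellSum_zero_right (x : Fin N → A) {a : ℕ} (ha : 0 < a) : bellSum q x a 0 = 0 := by
  rw [bellSum, bellIndex_zero_right ha, Finset.sum_empty]

variable {q} {x : Fin N → A}

theorem bellSum_succ_succ
    (hx : ∀ u v : Fin N, u < v → x v * x u = q ^ (v.val + 1) • (x u * x v))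
    {m : ℕ} (hq : ∀ i, 1 ≤ i → i ≤ m + 1 → qInt q i ≠ 0) (b : ℕ) :
    bellSum q x (m + 1) (b + 1) =
      ∑ j : Fin N with j.val + b ≤ m, qBinom q m (m - j) • (bellSum q x (m - j) b * x j) := by
  have hexpand : bellSum q x (m + 1) (b + 1) =
      ∑ s ∈ bellIndex N (m + 1) (b + 1), ∑ j with s j ≠ 0,
        (q ^ (∑ v ∈ Finset.Ioi j, (v.val + 1) * s v) *
          (qFact q m * qInt q ((j.val + 1) * s j) / bellDenom q s)) • orderedMonomial x s :=
    Finset.sum_congr rfl fun s hs => by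
      rw [bellCoeff_eq_sum q (mem_bellIndex.mp hs).2, Finset.sum_smul]
  rw [hexpand, sum_bellIndex_succ_succ]
  refine Finset.sum_congr rfl fun j hj => ?_
  rw [bellSum, Finset.sum_mul, Finset.smul_sum]
  refine Finset.sum_congr rfl fun t ht => ?_
  have hjm : partWeight t + j = m := by
    rw [Finset.mem_filter_univ] at hj
    rw [(mem_bellIndex.mp ht).2]
    omega
  have hne : bellDenom q (t + Pi.single j 1) ≠ 0 := bellDenom_ne_zero q fun i hi hle =>
    hq i hi (by rwa [partWeight_add_single, ← add_assoc, hjm] at hle)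
  have hcoeff := qBinom_mul_bellCoeff q hne
  rw [hjm, (mem_bellIndex.mp ht).2] at hcoeff
  rw [smul_mul_assoc, orderedMonomial_mul_apply_of_qComm hx, smul_smul, smul_smul, hcoeff,
    Pi.add_apply, Pi.single_eq_same, mul_comm]

theorem eq_bellSum_of_recurrence {d : ℕ → A}
    (hd : ∀ u v : Fin N, u < v →
      d (v + 1) * d (u + 1) = q ^ (v.val + 1) • (d (u + 1) * d (v + 1)))
    {B : ℕ → ℕ → A} (hB00 : B 0 0 = 1) (hB0 : ∀ a, 0 < a → B a 0 = 0)
    (hBrec : ∀ m b, b ≤ m → B (m + 1) (b + 1) =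
      ∑ ℓ ∈ Finset.Icc b m, qBinom q m ℓ • (B ℓ b * d (m + 1 - ℓ)))
    {a b : ℕ} (hq : ∀ i, 1 ≤ i → i ≤ a → qInt q i ≠ 0) (hba : b ≤ a) (haN : a < N + b) :
    B a b = bellSum q (fun i : Fin N => d (i + 1)) a b := by
  induction b generalizing a with
  | zero =>
    rcases Nat.eq_zero_or_pos a with rfl | ha
    · rw [hB00, bellSum_zero_zero]
    · rw [hB0 a ha, bellSum_zero_right q _ ha]
  | succ b ih =>
    obtain ⟨m, rfl⟩ := Nat.exists_eq_succ_of_ne_zero (Nat.ne_zero_of_lt hba)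
    rw [Nat.succ_eq_add_one, hBrec m b (Nat.le_of_succ_le_succ hba),
      sum_Icc_eq_sum_fin (N := N) (by omega), bellSum_succ_succ hd hq]
    refine Finset.sum_congr rfl fun j hj => ?_
    rw [Finset.mem_filter_univ] at hj
    rw [ih (fun i hi hle => hq i hi (by omega)) (by omega) (by omega),
      show m + 1 - (m - j) = j.val + 1 by omega]

end BellSum

/-- The q-commutative Bell differential polynomials (Theorem
`thm:q-comm-Bell-diff-poly`): if `d_v d_u = q^v d_u d_v` for `u < v`, then the
partial q-Bell polynomials `B_{n,k}` built from the `d_i` have the explicit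
q-multinomial form. -/
theorem stmt_14 {k A : Type*} [Field k] [Ring A] [Algebra k A]
    (q : k) (n : ℕ) (hn : 1 ≤ n)
    (hq : ∀ m : ℕ, 1 ≤ m → m ≤ n → qInt q m ≠ 0)
    (d : ℕ → A)
    (hd : ∀ u v : ℕ, 1 ≤ u → u < v → d v * d u = q ^ v • (d u * d v))
    (B : ℕ → ℕ → A)
    (hB00 : B 0 0 = 1)
    (hB0 : ∀ a : ℕ, 0 < a → B a 0 = 0)
    (hBgt : ∀ a b : ℕ, a < b → B a b = 0)
    (hBrec : ∀ a b : ℕ, 1 ≤ b → b ≤ a →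
      B a b = ∑ ℓ ∈ Finset.Icc (b - 1) (a - 1),
        qBinom q (a - 1) ℓ • (B ℓ (b - 1) * d (a - ℓ)))
    (K : ℕ) (hK1 : 1 ≤ K) (hK2 : K ≤ n) :
    B n K =
      ∑ᶠ t ∈ {t : Fin (n - K + 1) → ℕ |
          (∑ i, t i) = K ∧ (∑ i, (i.val + 1) * t i) = n},
        (qFact q n /
            ∏ i : Fin (n - K + 1),
              (qFact q (i.val + 1) ^ t i * qFact (q ^ (i.val + 1)) (t i))) •
          (List.ofFn fun i : Fin (n - K + 1) => d (i.val + 1) ^ t i).prod :=  by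
  have hexplicit : B n K = bellSum q (fun i : Fin (n - K + 1) => d (i + 1)) n K :=
    eq_bellSum_of_recurrence
      (fun u v huv => hd _ _ u.val.succ_pos (Nat.succ_lt_succ huv)) hB00 hB0
      (fun m b hbm => hBrec (m + 1) (b + 1) b.succ_pos (Nat.succ_le_succ hbm)) hq hK2 (by omega)
  have hindex : {t : Fin (n - K + 1) → ℕ |
      (∑ i, t i) = K ∧ (∑ i, (i.val + 1) * t i) = n} = ↑(bellIndex (n - K + 1) n K) :=
    Set.ext fun _ => mem_bellIndex.symm
  rw [hexplicit, hindex, finsum_mem_coe_finset, bellSum]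
  refine Finset.sum_congr rfl fun t ht => ?_
  rw [bellCoeff, (mem_bellIndex.mp ht).2, bellDenom, orderedMonomial]
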